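/- Let L be a line bundle on a compact complex manifold X of dimension 2n such that c₁(L)^{n+1} = 0 in H^{2n+2}(X, ℤ). If q is a quadratic form on H²(X, ℂ) satisfying the Fujiki relation ∫_X α^{2n} = λ · q(α)^n for all α ∈ H²(X, ℂ) with λ ≠ 0, then q(c₁(L)) = 0. -/

import Mathlib

/-- Let `X` be a compact complex manifold of dimension `2n` and
`L` a line bundle with `c₁(L)^{n+1} = 0` in cohomology.  If `q` is a
quadratic form on `H²(X, ℂ)` satisfying the Fujiki relation
`∫_X α^{2n} = λ · q(α)^n` with Fujiki constant `λ ≠ 0`, then `q(c₁(L)) = 0`.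

Formalized abstractly: `V` stands for `H²(X, ℂ)`, `A` for the (commutative)
even-degree cohomology ring of `X`, `ι : V →ₗ A` for the inclusion of `H²`,
`f : A →ₗ ℂ` for integration over `X` (evaluation of the top-degree part on
the fundamental class), `c` for `c₁(L)`, and `Q` for the quadratic form. -/
theorem fujiki_relation_isotropic
    {V A : Type*} [AddCommGroup V] [Module ℂ V] [CommRing A] [Algebra ℂ A]
    (n : ℕ) (hn : 1 ≤ n)
    (Q : QuadraticForm ℂ V) (ι : V →ₗ[ℂ] A) (f : A →ₗ[ℂ] ℂ) (lam : ℂ)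
    (hlam : lam ≠ 0)
    (hFujiki : ∀ α : V, f (ι α ^ (2 * n)) = lam * Q α ^ n)
    (c : V) (hc : ι c ^ (n + 1) = 0) :
    Q c = 0 := by
  -- Since `n ≥ 1`, the exponent `2n` is at least `n + 1`, so the top power of `c` vanishes.
  have hpow : ι c ^ (2 * n) = 0 := pow_eq_zero_of_le (by omega) hc
  have h : lam * Q c ^ n = 0 := by rw [← hFujiki, hpow, map_zero]
  exact eq_zero_of_pow_eq_zero ((mul_eq_zero.mp h).resolve_left hlam)
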